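/- Let s, s' ∈ ℂ and let t > 0 with t ≥ 2σ‖W‖. Let z ∈ ℂ_{≤1}^n be the fixed point of G(·, s, t) and z' ∈ ℂ_{≤1}^n the fixed point of G(·, s', t). Then ‖z − z'‖² ≤ 4n·t^{−2}·|s − s'|² and ‖(z* s + σWz) − (z* s' + σWz')‖² ≤ 4n·|s − s'|². -/

import Mathlib

open scoped Classical
open Matrix

noncomputable section

namespace PhaseSync

/-- Euclidean norm of a complex vector. -/
def enorm {k : ℕ} (v : Fin k → ℂ) : ℝ := Real.sqrt (∑ i, ‖v i‖ ^ 2)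

/-- Frobenius norm of a complex matrix. -/
def fnorm {k l : ℕ} (A : Matrix (Fin k) (Fin l) ℂ) : ℝ :=
  Real.sqrt (∑ i, ∑ j, ‖A i j‖ ^ 2)

/-- L2 operator norm of a square complex matrix. -/
def opNorm {k : ℕ} (A : Matrix (Fin k) (Fin k) ℂ) : ℝ :=
  ‖Matrix.toEuclideanCLM (𝕜 := ℂ) (n := Fin k) A‖

/-- Indicator function of a proposition. -/
def ind (P : Prop) : ℝ := if P then 1 else 0

/-- The loss ℓ_m(V, z) = min_{a : ‖a‖=1} ‖V - a zᴴ‖_F² / n. -/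
def lossM {k l : ℕ} (V : Matrix (Fin k) (Fin l) ℂ) (z : Fin l → ℂ) : ℝ :=
  sInf { r : ℝ | ∃ a : Fin k → ℂ, enorm a = 1 ∧
    r = fnorm (V - Matrix.vecMulVec a (star z)) ^ 2 / l }

/-- The loss ℓ_1(z', z) = min_{|a|=1} ‖z' - a z‖² / n. -/
def loss1 {l : ℕ} (z' z : Fin l → ℂ) : ℝ :=
  sInf { r : ℝ | ∃ a : ℂ, ‖a‖ = 1 ∧ r = enorm (z' - a • z) ^ 2 / l }

/-- The mapping F₁: entrywise normalization of Y z. -/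
def F1 {l : ℕ} (Y : Matrix (Fin l) (Fin l) ℂ) (z : Fin l → ℂ) : Fin l → ℂ :=
  fun j => if Y.mulVec z j ≠ 0 then Y.mulVec z j / (‖Y.mulVec z j‖ : ℂ) else z j

/-- jth column of a matrix. -/
def col {k l : ℕ} (A : Matrix (Fin k) (Fin l) ℂ) (j : Fin l) : Fin k → ℂ := fun i => A i j

/-- The mapping F_m: columnwise normalization of V Yᴴ. -/
def Fm {k l : ℕ} (Y : Matrix (Fin l) (Fin l) ℂ) (V : Matrix (Fin k) (Fin l) ℂ) :
    Matrix (Fin k) (Fin l) ℂ :=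
  Matrix.of fun i j =>
    if col (V * Yᴴ) j ≠ 0 then (V * Yᴴ) i j / ((enorm (col (V * Yᴴ) j) : ℝ) : ℂ) else V i j

/-- g_t(x) = x / max(|x|, t). -/
def gfun (t : ℝ) (x : ℂ) : ℂ := x / ((max (‖x‖) t : ℝ) : ℂ)

/-- The mapping G(z, s, t), coordinatewise g_t(z*_j s + σ [W z]_j). -/
def G {l : ℕ} (zstar : Fin l → ℂ) (σ : ℝ) (W : Matrix (Fin l) (Fin l) ℂ)
    (z : Fin l → ℂ) (s : ℂ) (t : ℝ) : Fin l → ℂ :=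
  fun j => gfun t (zstar j * s + (σ : ℂ) * W.mulVec z j)

/-- The mapping F₁'(z, s), entrywise normalization of z* s + σ W z. -/
def F1' {l : ℕ} (zstar : Fin l → ℂ) (σ : ℝ) (W : Matrix (Fin l) (Fin l) ℂ)
    (z : Fin l → ℂ) (s : ℂ) : Fin l → ℂ :=
  fun j =>
    if zstar j * s + (σ : ℂ) * W.mulVec z j ≠ 0 then
      (zstar j * s + (σ : ℂ) * W.mulVec z j) /
        ((‖zstar j * s + (σ : ℂ) * W.mulVec z j‖ : ℝ) : ℂ)
    else z j

/-- W with jth row and column zeroed out. -/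
def Wminus {l : ℕ} (W : Matrix (Fin l) (Fin l) ℂ) (j : Fin l) : Matrix (Fin l) (Fin l) ℂ :=
  Matrix.of fun k i => if k = j ∨ i = j then 0 else W k i

/-- `gfun t` is `1/t`-Lipschitz. -/
lemma gfun_lip (t : ℝ) (ht : 0 < t) (x y : ℂ) :
    t * ‖gfun t x - gfun t y‖ ≤ ‖x - y‖ := by
  have key : ∀ x : ℂ, ∃ (a : ℝ) (u : ℂ), gfun t x = u ∧ x = a * u ∧ t ≤ a ∧
      ‖u‖ ≤ 1 ∧ (a = t ∨ ‖u‖ = 1) := by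
    intro x
    have hpos : 0 < max ‖x‖ t := lt_max_of_lt_right ht
    have hn : ‖gfun t x‖ = ‖x‖ / max ‖x‖ t := by
      rw [gfun, norm_div, Complex.norm_real, Real.norm_of_nonneg hpos.le]
    refine ⟨max ‖x‖ t, gfun t x, rfl, ?_, le_max_right _ _, ?_, ?_⟩
    · have : ((max ‖x‖ t : ℝ) : ℂ) ≠ 0 := by exact_mod_cast hpos.ne'
      rw [gfun, mul_div_cancel₀ _ this]
    · rw [hn]
      exact (div_le_one hpos).2 (le_max_left _ _)
    · rcases le_total ‖x‖ t with h | h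
      · left; exact max_eq_right h
      · right
        rw [hn, max_eq_left h]
        exact div_self (by linarith)
  obtain ⟨a, u, hu, hx, hat, hu1, hau⟩ := key x
  obtain ⟨b, v, hv, hy, hbt, hv1, hbv⟩ := key y
  rw [hu, hv]
  have sq : ∀ w : ℂ, ‖w‖ ^ 2 = w.re ^ 2 + w.im ^ 2 := by
    intro w
    rw [Complex.sq_norm, Complex.normSq_apply]; ring
  have hu2 : u.re ^ 2 + u.im ^ 2 ≤ 1 := by
    rw [← sq]; nlinarith [norm_nonneg u]
  have hv2 : v.re ^ 2 + v.im ^ 2 ≤ 1 := by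
    rw [← sq]; nlinarith [norm_nonneg v]
  have h1 : 0 ≤ (a - t) * (u.re ^ 2 + u.im ^ 2 - (u.re * v.re + u.im * v.im)) := by
    rcases hau with h | h
    · simp [h]
    · have e : u.re ^ 2 + u.im ^ 2 = 1 := by rw [← sq, h]; norm_num
      apply mul_nonneg (by linarith)
      nlinarith [sq_nonneg (u.re - v.re), sq_nonneg (u.im - v.im)]
  have h2 : 0 ≤ (b - t) * (v.re ^ 2 + v.im ^ 2 - (u.re * v.re + u.im * v.im)) := by
    rcases hbv with h | h
    · simp [h]
    · have e : v.re ^ 2 + v.im ^ 2 = 1 := by rw [← sq, h]; norm_num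
      apply mul_nonneg (by linarith)
      nlinarith [sq_nonneg (u.re - v.re), sq_nonneg (u.im - v.im)]
  refine le_trans (le_abs_self _) (abs_le_of_sq_le_sq ?_ (norm_nonneg _))
  rw [mul_pow, sq, sq, hx, hy]
  simp only [Complex.sub_re, Complex.sub_im, Complex.re_ofReal_mul, Complex.im_ofReal_mul]
  have h3 := mul_nonneg ht.le (add_nonneg h1 h2)
  nlinarith [sq_nonneg ((a - t) * u.re - (b - t) * v.re),
    sq_nonneg ((a - t) * u.im - (b - t) * v.im)]

lemma enorm_eq {k : ℕ} (v : Fin k → ℂ) : enorm v = ‖WithLp.toLp 2 v‖ := by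
  rw [EuclideanSpace.norm_eq]; rfl

lemma enorm_mulVec_le {k : ℕ} (A : Matrix (Fin k) (Fin k) ℂ) (v : Fin k → ℂ) :
    enorm (A.mulVec v) ≤ opNorm A * enorm v := by
  rw [enorm_eq, enorm_eq, opNorm]
  exact (Matrix.toEuclideanCLM (𝕜 := ℂ) (n := Fin k) A).le_opNorm (WithLp.toLp 2 v)

theorem stmt15 {n : ℕ} (hn : 1 ≤ n)
    (zstar : Fin n → ℂ) (hzstar : ∀ j, ‖zstar j‖ = 1)
    (σ : ℝ) (hσ : 0 < σ) (W : Matrix (Fin n) (Fin n) ℂ) (hW : W.IsHermitian)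
    (s s' : ℂ) (t : ℝ) (ht : 0 < t) (ht2 : 2 * σ * opNorm W ≤ t)
    (z : Fin n → ℂ) (hz1 : ∀ i, ‖z i‖ ≤ 1) (hz2 : z = G zstar σ W z s t)
    (z' : Fin n → ℂ) (hz1' : ∀ i, ‖z' i‖ ≤ 1) (hz2' : z' = G zstar σ W z' s' t) :
    enorm (z - z') ^ 2 ≤ 4 * (n : ℝ) * t⁻¹ ^ 2 * ‖s - s'‖ ^ 2 ∧
    enorm ((fun j => zstar j * s + (σ : ℂ) * W.mulVec z j) -
        (fun j => zstar j * s' + (σ : ℂ) * W.mulVec z' j)) ^ 2 ≤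
      4 * (n : ℝ) * ‖s - s'‖ ^ 2 := by
  set X : Fin n → ℂ := (fun j => zstar j * s + (σ : ℂ) * W.mulVec z j) -
        (fun j => zstar j * s' + (σ : ℂ) * W.mulVec z' j) with hX
  have hD0 : 0 ≤ enorm (z - z') := Real.sqrt_nonneg _
  have hX0 : 0 ≤ enorm X := Real.sqrt_nonneg _
  have hDX : t * enorm (z - z') ≤ enorm X := by
    refine le_trans (le_abs_self _) (abs_le_of_sq_le_sq ?_ hX0)
    rw [mul_pow, enorm, enorm, Real.sq_sqrt (by positivity), Real.sq_sqrt (by positivity),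
      Finset.mul_sum]
    apply Finset.sum_le_sum
    intro j _
    rw [← mul_pow]
    apply pow_le_pow_left₀ (by positivity)
    have := gfun_lip t ht (zstar j * s + (σ : ℂ) * W.mulVec z j)
      (zstar j * s' + (σ : ℂ) * W.mulVec z' j)
    have e1 : z j = gfun t (zstar j * s + (σ : ℂ) * W.mulVec z j) := congrFun hz2 j
    have e2 : z' j = gfun t (zstar j * s' + (σ : ℂ) * W.mulVec z' j) := congrFun hz2' j
    rw [← e1, ← e2] at this
    exact this
  have hS : enorm ((s - s') • zstar) = Real.sqrt n * ‖s - s'‖ := by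
    rw [enorm]
    simp [hzstar]
  have hXle : enorm X ≤ Real.sqrt n * ‖s - s'‖ + σ * (opNorm W * enorm (z - z')) := by
    have e : X = (s - s') • zstar + (σ : ℂ) • W.mulVec (z - z') := by
      ext j
      simp only [hX, Matrix.mulVec_sub, Pi.sub_apply, Pi.add_apply, Pi.smul_apply, smul_eq_mul]
      ring
    have h1 := norm_add_le (WithLp.toLp 2 ((s - s') • zstar))
      ((σ : ℂ) • WithLp.toLp 2 (W.mulVec (z - z')))
    rw [norm_smul, ← enorm_eq ((s - s') • zstar), ← enorm_eq (W.mulVec (z - z')), Complex.norm_real, Real.norm_of_nonneg hσ.le, hS] at h1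
    rw [e, enorm_eq]
    have h2 := mul_le_mul_of_nonneg_left (enorm_mulVec_le W (z - z')) hσ.le
    refine le_trans h1 ?_
    linarith
  have hX2 : enorm X ≤ 2 * (Real.sqrt n * ‖s - s'‖) := by
    have := mul_le_mul_of_nonneg_right ht2 hD0
    nlinarith
  have hsn : Real.sqrt n ^ 2 = n := Real.sq_sqrt (by positivity)
  have hfin : enorm X ^ 2 ≤ 4 * (n : ℝ) * ‖s - s'‖ ^ 2 := by
    have := pow_le_pow_left₀ hX0 hX2 2
    rw [mul_pow, mul_pow, hsn] at this
    linarith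
  refine ⟨?_, hfin⟩
  have h := (pow_le_pow_left₀ (by positivity) hDX 2).trans hfin
  rw [mul_pow] at h
  have : enorm (z - z') ^ 2 = t⁻¹ ^ 2 * (t ^ 2 * enorm (z - z') ^ 2) := by
    field_simp
  rw [this]
  calc _ ≤ t⁻¹ ^ 2 * (4 * (n : ℝ) * ‖s - s'‖ ^ 2) := by gcongr
    _ = _ := by ring

end PhaseSync
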